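/- Assume additionally that 0 belongs to the spectrum of A, in the sense that there is a sequence (wₙ) in D(A) with ‖wₙ‖ = 1 and ‖Awₙ‖ → 0. Then there exists c₀ > 0 such that for every T > 0 there exist t > T, a strong solution u of the abstract damped wave equation with data u(0) = u₀ ∈ D(A), u'(0) = u₁ satisfying ‖u₀‖² + re⟪Au₀,u₀⟫ + ‖u₁‖² ≤ 1, and a solution v of the associated abstract heat equation with v(0) = B^{1/2}u₀ + B^{-1/2}u₁, such that t·‖u(t) − B^{-1/2}v(t)‖ ≥ c₀. (That is, the uniform decay rate t⁻¹ in the diffusion approximation is optimal.) -/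

import Mathlib

open scoped ComplexInnerProductSpace

/-- A strong solution of the abstract damped wave equation `u'' + Au + Bu' = 0` on `[0,∞)`. -/
structure DampedWaveSolution
    {H : Type*} [NormedAddCommGroup H] [InnerProductSpace ℂ H] [CompleteSpace H]
    (A : H →ₗ.[ℂ] H) (B : H →L[ℂ] H) where
  u : ℝ → H
  du : ℝ → H
  ddu : ℝ → H
  Au : ℝ → H
  mem : ∀ t : ℝ, 0 ≤ t → u t ∈ A.domain
  hAu : ∀ (t : ℝ) (ht : 0 ≤ t), A ⟨u t, mem t ht⟩ = Au t
  hdu : ∀ t : ℝ, 0 ≤ t → HasDerivWithinAt u (du t) (Set.Ici 0) t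
  hddu : ∀ t : ℝ, 0 ≤ t → HasDerivWithinAt du (ddu t) (Set.Ici 0) t
  cont_ddu : ContinuousOn ddu (Set.Ici 0)
  cont_Au : ContinuousOn Au (Set.Ici 0)
  eqn : ∀ t : ℝ, 0 ≤ t → ddu t + Au t + B (du t) = 0

/-- A solution of the associated abstract heat equation
`v' + B^{-1/2} A B^{-1/2} v = 0` on `[0,∞)`, where `Binvh` stands for `B^{-1/2}`. -/
structure HeatSolution
    {H : Type*} [NormedAddCommGroup H] [InnerProductSpace ℂ H] [CompleteSpace H]
    (A : H →ₗ.[ℂ] H) (Binvh : H →L[ℂ] H) where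
  v : ℝ → H
  dv : ℝ → H
  mem : ∀ t : ℝ, 0 ≤ t → Binvh (v t) ∈ A.domain
  hdv : ∀ t : ℝ, 0 ≤ t → HasDerivWithinAt v (dv t) (Set.Ici 0) t
  cont_dv : ContinuousOn dv (Set.Ici 0)
  eqn : ∀ (t : ℝ) (ht : 0 ≤ t), dv t + Binvh (A ⟨Binvh (v t), mem t ht⟩) = 0

set_option linter.all false
set_option linter.unusedSectionVars false
set_option linter.unusedSimpArgs false
/-- Graph of a nonnegative self-adjoint operator. -/
structure PosSA {H : Type*} [NormedAddCommGroup H] [InnerProductSpace ℂ H]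
    (S : Submodule ℂ (H × H)) : Prop where
  closed : IsClosed (S : Set (H × H))
  symm : ∀ p ∈ S, ∀ q ∈ S, ⟪p.2, q.1⟫ = ⟪p.1, q.2⟫
  pos : ∀ p ∈ S, 0 ≤ (⟪p.2, p.1⟫).re
  max : ∀ x y : H, (∀ p ∈ S, ⟪y, p.1⟫ = ⟪x, p.2⟫) → (x, y) ∈ S

theorem PosSA.of_selfAdjoint {H : Type*} [NormedAddCommGroup H] [InnerProductSpace ℂ H]
    [CompleteSpace H] (A : H →ₗ.[ℂ] H) (hA : IsSelfAdjoint A)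
    (hA_pos : ∀ u : A.domain, u ≠ 0 → 0 < (⟪A u, (u : H)⟫).re) : PosSA A.graph where
  closed := hA.isClosed
  symm := by
    rintro ⟨x, y⟩ hp ⟨x', y'⟩ hq
    obtain ⟨u, hu, hu'⟩ := (LinearPMap.mem_graph_iff A).1 hp
    obtain ⟨v, hv, hv'⟩ := (LinearPMap.mem_graph_iff A).1 hq
    simp only at *
    subst hu hu' hv hv'
    have h := LinearPMap.adjoint_isFormalAdjoint (hA.dense_domain)
    rw [(LinearPMap.isSelfAdjoint_def).1 hA] at h
    exact h u v
  pos := by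
    rintro ⟨x, y⟩ hp
    obtain ⟨u, hu, hu'⟩ := (LinearPMap.mem_graph_iff A).1 hp
    simp only at *
    subst hu hu'
    by_cases h : u = 0
    · subst h; simp
    · exact (hA_pos u h).le
  max := by
    intro x y h
    have h' : ∀ v : A.domain, ⟪y, (v : H)⟫ = ⟪x, A v⟫ := fun v => h (v, A v) (A.mem_graph v)
    have hx : x ∈ (LinearPMap.adjoint A).domain := LinearPMap.mem_adjoint_domain_of_exists x ⟨y, h'⟩
    have hy := LinearPMap.adjoint_apply_eq hA.dense_domain ⟨x, hx⟩ h'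
    rw [← (LinearPMap.isSelfAdjoint_def).1 hA]
    exact (LinearPMap.mem_graph_iff _).2 ⟨⟨x, hx⟩, rfl, hy⟩

section
variable {H : Type*} [NormedAddCommGroup H] [InnerProductSpace ℂ H] [CompleteSpace H]

theorem PosSA.lower {S : Submodule ℂ (H × H)} (hS : PosSA S) (P : H →L[ℂ] H) (c : ℝ)
    (hP : ∀ u : H, c * ‖u‖ ^ 2 ≤ (⟪P u, u⟫).re) (p : H × H) (hp : p ∈ S) :
    c * ‖p.1‖ ≤ ‖p.2 + P p.1‖ := by
  have h1 := hS.pos p hp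
  have h2 := hP p.1
  have h3 : (⟪p.2 + P p.1, p.1⟫).re ≤ ‖p.2 + P p.1‖ * ‖p.1‖ := re_inner_le_norm (𝕜 := ℂ) _ _
  rw [inner_add_left, Complex.add_re] at h3
  rcases (norm_nonneg p.1).eq_or_lt with h | h
  · rw [← h]; simp
  · nlinarith

theorem PosSA.resolvent {S : Submodule ℂ (H × H)} (hS : PosSA S) (P : H →L[ℂ] H)
    (hPs : ∀ x y : H, ⟪P x, y⟫ = ⟪x, P y⟫) (c : ℝ) (hc : 0 < c)
    (hP : ∀ u : H, c * ‖u‖ ^ 2 ≤ (⟪P u, u⟫).re) :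
    ∃ G : H →L[ℂ] H, (∀ f, (G f, f - P (G f)) ∈ S) ∧ (∀ p ∈ S, G (p.2 + P p.1) = p.1) ∧
      (∀ f, c * ‖G f‖ ≤ ‖f‖) := by
  have hlow := hS.lower P c hP
  let T : S →ₗ[ℂ] H :=
    (LinearMap.snd ℂ H H + P.toLinearMap ∘ₗ LinearMap.fst ℂ H H) ∘ₗ S.subtype
  have hT : ∀ p : S, T p = p.1.2 + P p.1.1 := fun p => rfl
  have hinj : Function.Injective T := by
    rw [← LinearMap.ker_eq_bot, LinearMap.ker_eq_bot']
    intro p hp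
    rw [hT] at hp
    have h1 := hlow p p.2
    rw [hp, norm_zero] at h1
    have h2 : p.1.1 = 0 := by
      rw [← norm_le_zero_iff]; nlinarith [norm_nonneg p.1.1]
    rw [h2, map_zero, add_zero] at hp
    exact Subtype.ext (Prod.ext h2 hp)
  have hcl : IsClosed ((LinearMap.range T : Submodule ℂ H) : Set H) := by
    rw [← isSeqClosed_iff_isClosed]
    intro f f0 hf hlim
    choose q hq using hf
    have hcau : CauchySeq (fun n => (q n).1.1) := by
      rw [Metric.cauchySeq_iff]
      intro ε hε
      obtain ⟨N, hN⟩ := Metric.cauchySeq_iff.1 hlim.cauchySeq (c * ε) (by positivity)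
      refine ⟨N, fun m hm n hn => ?_⟩
      have h1 := hN m hm n hn
      have h2 := hlow (q m - q n : S) (q m - q n : S).2
      rw [← hT, map_sub, hq, hq] at h2
      rw [dist_eq_norm] at h1 ⊢
      have h3 : c * ‖(q m).1.1 - (q n).1.1‖ < c * ε := lt_of_le_of_lt h2 h1
      exact lt_of_mul_lt_mul_left h3 hc.le
    obtain ⟨x, hx⟩ := cauchySeq_tendsto_of_complete hcau
    have h2 : Filter.Tendsto (fun n => (q n).1.2) Filter.atTop (nhds (f0 - P x)) := by
      have : (fun n => (q n).1.2) = fun n => f n - P (q n).1.1 := by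
        funext n; rw [← hq, hT]; abel
      rw [this]
      exact hlim.sub ((P.continuous.tendsto x).comp hx)
    have h3 : (x, f0 - P x) ∈ S := by
      refine hS.closed.mem_of_tendsto (hx.prodMk_nhds h2) (Filter.Eventually.of_forall fun n => (q n).2)
    exact ⟨⟨_, h3⟩, by rw [hT]; simp⟩
  have hsurj : Function.Surjective T := by
    rw [← LinearMap.range_eq_top]
    have : (LinearMap.range T).HasOrthogonalProjection := by
      have := hcl.completeSpace_coe
      infer_instance
    rw [← Submodule.orthogonal_eq_bot_iff, Submodule.eq_bot_iff]
    intro x hx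
    rw [Submodule.mem_orthogonal'] at hx
    have h1 : (x, - P x) ∈ S := by
      apply hS.max
      intro p hp
      have := hx (T ⟨p, hp⟩) ⟨_, rfl⟩
      rw [hT, inner_add_right] at this
      simp only at this
      rw [inner_neg_left, hPs]
      linear_combination -this
    have h2 := hlow _ h1
    simp only [neg_add_cancel, norm_zero] at h2
    rw [← norm_le_zero_iff]; nlinarith [norm_nonneg x]
  let e := LinearEquiv.ofBijective T ⟨hinj, hsurj⟩
  have he : ∀ f, (e.symm f).1.2 + P (e.symm f).1.1 = f := fun f => by
    rw [← hT]; exact e.apply_symm_apply f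
  let G0 : H →ₗ[ℂ] H := LinearMap.fst ℂ H H ∘ₗ S.subtype ∘ₗ e.symm.toLinearMap
  have hG0 : ∀ f, G0 f = (e.symm f).1.1 := fun f => rfl
  have hb : ∀ f, c * ‖G0 f‖ ≤ ‖f‖ := fun f => by
    have := hlow (e.symm f) (e.symm f).2
    rwa [he] at this
  refine ⟨G0.mkContinuous c⁻¹ (fun f => ?_), fun f => ?_, fun p hp => ?_, fun f => hb f⟩
  · rw [inv_mul_eq_div, le_div_iff₀ hc, mul_comm]; exact hb f
  · have h := (e.symm f).2
    have h1 : (e.symm f).1 = (G0 f, f - P (G0 f)) := by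
      refine Prod.ext rfl ?_
      rw [hG0]; simp only
      rw [eq_sub_iff_add_eq, he]
    rw [h1] at h
    exact h
  · change G0 (p.2 + P p.1) = p.1
    rw [hG0]
    have : e ⟨p, hp⟩ = p.2 + P p.1 := rfl
    rw [← this, e.symm_apply_apply]

theorem exp_ode {E : Type*} [NormedAddCommGroup E] [NormedSpace ℂ E] [CompleteSpace E]
    (M : E →L[ℂ] E) (x : E) :
    ∃ X : ℕ → ℝ → E, (∀ k t, HasDerivAt (X k) (X (k + 1) t) t) ∧ X 0 0 = x ∧
      ∀ k t, X (k + 1) t = M (X k t) := by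
  let X : ℕ → ℝ → E := fun k t => (NormedSpace.exp (t • M)) ((M ^ k) x)
  have hcomm : ∀ k t, X (k + 1) t = M (X k t) := by
    intro k t
    have h1 : Commute M (NormedSpace.exp (t • M)) :=
      ((Commute.refl M).smul_right t).exp_right
    change (NormedSpace.exp (t • M)) ((M ^ (k + 1)) x) =
      M ((NormedSpace.exp (t • M)) ((M ^ k) x))
    rw [pow_succ']
    have := congrArg (fun Z : E →L[ℂ] E => Z ((M ^ k) x)) h1.eq
    exact this.symm
  have hder : ∀ k t, HasDerivAt (X k) (X (k + 1) t) t := by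
    intro k t
    have h1 := hasDerivAt_exp_smul_const (𝕂 := ℝ) M t
    have h2 := ((ContinuousLinearMap.apply ℂ E ((M ^ k) x)).restrictScalars ℝ).hasFDerivAt.comp_hasDerivAt t h1
    refine h2.congr_deriv ?_
    change (NormedSpace.exp (t • M) * M) ((M ^ k) x) = (NormedSpace.exp (t • M)) ((M ^ (k + 1)) x)
    rw [pow_succ']; rfl
  exact ⟨X, hder, by simp [X], hcomm⟩

/-- Solutions of the bounded second order equation together with all derivatives. -/
theorem bounded_ode (A' B : H →L[ℂ] H) (a b : H) :
    ∃ w : ℕ → ℝ → H, (∀ k t, HasDerivAt (w k) (w (k + 1) t) t) ∧ w 0 0 = a ∧ w 1 0 = b ∧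
      ∀ k t, w (k + 2) t = - A' (w k t) - B (w (k + 1) t) := by
  let fs := ContinuousLinearMap.fst ℂ H H
  let sn := ContinuousLinearMap.snd ℂ H H
  let M : (H × H) →L[ℂ] (H × H) := sn.prod (- (A' ∘L fs) - B ∘L sn)
  have hM : ∀ p, M p = (p.2, - A' p.1 - B p.2) := fun p => rfl
  obtain ⟨X, hder, h0, hcomm⟩ := exp_ode M (a, b)
  refine ⟨fun k t => (X k t).1, fun k t => ?_, ?_, ?_, fun k t => ?_⟩
  · exact ((ContinuousLinearMap.fst ℝ H H).hasFDerivAt).comp_hasDerivAt t (hder k t)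
  · simp [h0]
  · simp [hM, h0, hcomm 0 0]
  · simp only
    rw [hcomm (k + 1), hM, hcomm k, hM]
end

section
variable {H : Type*} [NormedAddCommGroup H] [InnerProductSpace ℂ H] [CompleteSpace H]

theorem PosSA.yosida {S : Submodule ℂ (H × H)} (hS : PosSA S) (ε : ℝ) (hε : 0 < ε) :
    ∃ Y : H →L[ℂ] H, (∀ f, (f - (ε : ℂ) • Y f, Y f) ∈ S) ∧ (∀ p ∈ S, ‖Y p.1‖ ≤ ‖p.2‖) := by
  have hεc : (ε : ℂ) ≠ 0 := by exact_mod_cast hε.ne'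
  have hco : ∀ u : H, ε⁻¹ * ‖u‖ ^ 2 ≤ (⟪(((ε⁻¹ : ℝ) : ℂ) • ContinuousLinearMap.id ℂ H) u, u⟫).re := by
    intro u
    have h : (((ε⁻¹ : ℝ) : ℂ) • ContinuousLinearMap.id ℂ H) u = ((ε⁻¹ : ℝ) : ℂ) • u := rfl
    rw [h, inner_smul_left, Complex.conj_ofReal, Complex.re_ofReal_mul]
    have := inner_self_eq_norm_sq (𝕜 := ℂ) u
    change (⟪u, u⟫).re = _ at this
    rw [this]
  obtain ⟨G, hG1, hG2, hG3⟩ := hS.resolvent (((ε⁻¹ : ℝ) : ℂ) • ContinuousLinearMap.id ℂ H)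
    (fun x y => by
      change ⟪((ε⁻¹ : ℝ) : ℂ) • x, y⟫ = ⟪x, ((ε⁻¹ : ℝ) : ℂ) • y⟫
      rw [inner_smul_left, inner_smul_right, Complex.conj_ofReal]) ε⁻¹ (inv_pos.2 hε) hco
  have hPa : ∀ u, (((ε⁻¹ : ℝ) : ℂ) • ContinuousLinearMap.id ℂ H) u = ((ε⁻¹ : ℝ) : ℂ) • u :=
    fun u => rfl
  refine ⟨((ε⁻¹ : ℝ) : ℂ) • (ContinuousLinearMap.id ℂ H - ((ε⁻¹ : ℝ) : ℂ) • G), fun f => ?_,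
    fun p hp => ?_⟩
  · have h := S.smul_mem ((ε⁻¹ : ℝ) : ℂ) (hG1 f)
    convert h using 1
    refine Prod.ext ?_ ?_
    · simp [smul_smul, hεc]
    · simp
  · have h := hG2 p hp
    rw [hPa, map_add, map_smul] at h
    have h2 : (((ε⁻¹ : ℝ) : ℂ) • (ContinuousLinearMap.id ℂ H - ((ε⁻¹ : ℝ) : ℂ) • G)) p.1
        = ((ε⁻¹ : ℝ) : ℂ) • G p.2 := by
      change ((ε⁻¹ : ℝ) : ℂ) • (p.1 - ((ε⁻¹ : ℝ) : ℂ) • G p.1) = _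
      rw [sub_eq_iff_eq_add.2 h.symm]
    rw [h2, norm_smul, Complex.norm_real, Real.norm_of_nonneg (inv_pos.2 hε).le]
    exact hG3 _

/-- Real part of the inner product. -/
noncomputable def ip (x y : H) : ℝ := (⟪x, y⟫).re

theorem ip_comm (x y : H) : ip x y = ip y x := inner_re_symm (𝕜 := ℂ) x y
theorem ip_self (x : H) : ip x x = ‖x‖ ^ 2 := inner_self_eq_norm_sq (𝕜 := ℂ) x
theorem ip_add_left (x y z : H) : ip (x + y) z = ip x z + ip y z := by simp [ip, inner_add_left]
theorem ip_add_right (x y z : H) : ip x (y + z) = ip x y + ip x z := by simp [ip, inner_add_right]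
theorem ip_sub_left (x y z : H) : ip (x - y) z = ip x z - ip y z := by simp [ip, inner_sub_left]
theorem ip_sub_right (x y z : H) : ip x (y - z) = ip x y - ip x z := by simp [ip, inner_sub_right]
theorem ip_neg_left (x z : H) : ip (-x) z = - ip x z := by simp [ip]
theorem ip_neg_right (x z : H) : ip x (-z) = - ip x z := by simp [ip]
theorem ip_smul_left (r : ℝ) (x z : H) : ip ((r : ℂ) • x) z = r * ip x z := by
  simp [ip, inner_smul_left]
theorem ip_smul_right (r : ℝ) (x z : H) : ip x ((r : ℂ) • z) = r * ip x z := by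
  simp [ip, inner_smul_right]
theorem ip_le (x y : H) : ip x y ≤ ‖x‖ * ‖y‖ := re_inner_le_norm (𝕜 := ℂ) x y
theorem abs_ip_le (x y : H) : |ip x y| ≤ ‖x‖ * ‖y‖ :=
  (Complex.abs_re_le_norm _).trans (norm_inner_le_norm x y)
theorem ip_hasDerivAt {f g : ℝ → H} {f' g' : H} {t : ℝ} (hf : HasDerivAt f f' t)
    (hg : HasDerivAt g g' t) : HasDerivAt (fun s => ip (f s) (g s)) (ip (f t) g' + ip f' (g t)) t := by
  have h := Complex.reCLM.hasFDerivAt.comp_hasDerivAt t (hf.inner ℂ hg)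
  refine h.congr_deriv ?_
  simp [ip]

theorem clm_hasDerivAt (L : H →L[ℂ] H) {f : ℝ → H} {f' : H} {t : ℝ} (hf : HasDerivAt f f' t) :
    HasDerivAt (fun s => L (f s)) (L f') t :=
  (L.restrictScalars ℝ).hasFDerivAt.comp_hasDerivAt t hf

theorem mvt_le {f f' : ℝ → ℝ} {a b C : ℝ} (hab : a ≤ b)
    (hf : ∀ t ∈ Set.Icc a b, HasDerivAt f (f' t) t) (hC : ∀ t ∈ Set.Icc a b, f' t ≤ C) :
    f b - f a ≤ C * (b - a) := by
  refine Convex.image_sub_le_mul_sub_of_deriv_le (convex_Icc a b)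
    (fun t ht => (hf t ht).continuousAt.continuousWithinAt)
    (fun t ht => (hf t (interior_subset ht)).differentiableAt.differentiableWithinAt)
    (fun t ht => ?_) a (Set.left_mem_Icc.2 hab) b (Set.right_mem_Icc.2 hab) hab
  rw [(hf t (interior_subset ht)).deriv]
  exact hC t (interior_subset ht)

theorem PosSA.ip_symm {S : Submodule ℂ (H × H)} (hS : PosSA S) {p q : H × H} (hp : p ∈ S)
    (hq : q ∈ S) : ip p.2 q.1 = ip p.1 q.2 := congrArg Complex.re (hS.symm p hp q hq)

theorem PosSA.yosida_symm {S : Submodule ℂ (H × H)} (hS : PosSA S) {ε : ℝ}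
    {Y : H →L[ℂ] H} (hY : ∀ f, (f - (ε : ℂ) • Y f, Y f) ∈ S) (f g : H) :
    ip (Y f) g = ip f (Y g) := by
  have := hS.ip_symm (hY f) (hY g)
  simp only [ip_sub_left, ip_sub_right, ip_smul_left, ip_smul_right] at this
  linarith

theorem PosSA.yosida_pos {S : Submodule ℂ (H × H)} (hS : PosSA S) {ε : ℝ}
    {Y : H →L[ℂ] H} (hY : ∀ f, (f - (ε : ℂ) • Y f, Y f) ∈ S) (f : H) :
    ε * ‖Y f‖ ^ 2 ≤ ip (Y f) f := by
  have : 0 ≤ ip _ _ := hS.pos _ (hY f)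
  simp only [ip_sub_right, ip_smul_right, ip_self] at this
  linarith

theorem energy_le {Y B : H →L[ℂ] H} (hYs : ∀ f g, ip (Y f) g = ip f (Y g))
    (hB : ∀ f, 0 ≤ ip (B f) f) {w0 w1 w2 : ℝ → H} (h0 : ∀ t, HasDerivAt w0 (w1 t) t)
    (h1 : ∀ t, HasDerivAt w1 (w2 t) t) (h2 : ∀ t, w2 t = - Y (w0 t) - B (w1 t)) (t : ℝ)
    (ht : 0 ≤ t) : ‖w1 t‖ ^ 2 + ip (Y (w0 t)) (w0 t) ≤ ‖w1 0‖ ^ 2 + ip (Y (w0 0)) (w0 0) := by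
  have hd : ∀ s ∈ Set.Icc 0 t, HasDerivAt (fun s => ip (w1 s) (w1 s) + ip (Y (w0 s)) (w0 s))
      ((ip (w1 s) (w2 s) + ip (w2 s) (w1 s)) + (ip (Y (w0 s)) (w1 s) + ip (Y (w1 s)) (w0 s))) s :=
    fun s _ => (ip_hasDerivAt (h1 s) (h1 s)).add (ip_hasDerivAt (clm_hasDerivAt Y (h0 s)) (h0 s))
  have := mvt_le ht hd (C := 0) (fun s _ => by
    rw [ip_comm (w1 s) (w2 s), hYs (w1 s) (w0 s), ip_comm (w1 s) (Y (w0 s)), h2, ip_sub_left,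
      ip_neg_left]
    linarith [hB (w1 s)])
  simp only [ip_self] at this
  linarith

theorem PosSA.pair_le {S : Submodule ℂ (H × H)} (hS : PosSA S) {ε₁ ε₂ : ℝ}
    (hε₁ : 0 < ε₁) (hε₂ : 0 < ε₂) {Y Z B : H →L[ℂ] H}
    (hY : ∀ f, (f - (ε₁ : ℂ) • Y f, Y f) ∈ S) (hZ : ∀ f, (f - (ε₂ : ℂ) • Z f, Z f) ∈ S)
    (hB : ∀ f, 0 ≤ ip (B f) f) {w0 w1 w2 z0 z1 z2 : ℝ → H}
    (h0 : ∀ t, HasDerivAt w0 (w1 t) t)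
    (h1 : ∀ t, HasDerivAt w1 (w2 t) t) (h2 : ∀ t, w2 t = - Y (w0 t) - B (w1 t))
    (k0 : ∀ t, HasDerivAt z0 (z1 t) t)
    (k1 : ∀ t, HasDerivAt z1 (z2 t) t) (k2 : ∀ t, z2 t = - Z (z0 t) - B (z1 t))
    {K η₁ η₂ : ℝ} (hK : 0 ≤ K)
    (b1 : ∀ t, 0 ≤ t → ‖Y (w0 t)‖ ≤ K) (b2 : ∀ t, 0 ≤ t → ‖Z (z0 t)‖ ≤ K)
    (b3 : ∀ t, 0 ≤ t → ε₁ * ‖Y (w1 t)‖ ≤ K * η₁) (b4 : ∀ t, 0 ≤ t → ε₂ * ‖Z (z1 t)‖ ≤ K * η₂)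
    (t : ℝ) (ht : 0 ≤ t) :
    ‖w1 t - z1 t‖ ^ 2 ≤ ‖w1 0 - z1 0‖ ^ 2 +
      ip (Y (w0 0) - Z (z0 0)) ((w0 0 - (ε₁ : ℂ) • Y (w0 0)) - (z0 0 - (ε₂ : ℂ) • Z (z0 0))) +
      4 * K ^ 2 * (η₁ + η₂) * t := by
  let q : ℝ → H := fun t => (w0 t - (ε₁ : ℂ) • Y (w0 t)) - (z0 t - (ε₂ : ℂ) • Z (z0 t))
  let aq : ℝ → H := fun t => Y (w0 t) - Z (z0 t)
  let q' : ℝ → H := fun t => (w1 t - (ε₁ : ℂ) • Y (w1 t)) - (z1 t - (ε₂ : ℂ) • Z (z1 t))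
  let aq' : ℝ → H := fun t => Y (w1 t) - Z (z1 t)
  have hq : ∀ t, (q t, aq t) ∈ S := fun t => S.sub_mem (hY (w0 t)) (hZ (z0 t))
  have hq' : ∀ t, (q' t, aq' t) ∈ S := fun t => S.sub_mem (hY (w1 t)) (hZ (z1 t))
  have dq : ∀ t, HasDerivAt q (q' t) t := fun t =>
    ((h0 t).sub (clm_hasDerivAt ((ε₁ : ℂ) • Y) (h0 t))).sub
      ((k0 t).sub (clm_hasDerivAt ((ε₂ : ℂ) • Z) (k0 t)))
  have daq : ∀ t, HasDerivAt aq (aq' t) t := fun t =>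
    (clm_hasDerivAt Y (h0 t)).sub (clm_hasDerivAt Z (k0 t))
  have hd : ∀ s ∈ Set.Icc 0 t, HasDerivAt
      (fun s => ip (w1 s - z1 s) (w1 s - z1 s) + ip (aq s) (q s))
      ((ip (w1 s - z1 s) (w2 s - z2 s) + ip (w2 s - z2 s) (w1 s - z1 s)) +
        (ip (aq s) (q' s) + ip (aq' s) (q s))) s :=
    fun s _ => (ip_hasDerivAt ((h1 s).sub (k1 s)) ((h1 s).sub (k1 s))).add
      (ip_hasDerivAt (daq s) (dq s))
  have key := mvt_le ht hd (C := 4 * K ^ 2 * (η₁ + η₂)) (fun s hs => by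
    have e1 : ip (aq' s) (q s) = ip (aq s) (q' s) := by
      rw [hS.ip_symm (hq' s) (hq s), ip_comm]
    have e2 : w2 s - z2 s = - aq s - B (w1 s - z1 s) := by
      rw [h2, k2, map_sub]; simp only [aq]; abel
    have e3 : q' s = (w1 s - z1 s) - ((ε₁ : ℂ) • Y (w1 s) - (ε₂ : ℂ) • Z (z1 s)) := by
      simp only [q']; abel
    rw [ip_comm (w1 s - z1 s) (w2 s - z2 s), e1, e2, e3, ip_sub_left, ip_neg_left, ip_sub_right (aq s) (w1 s - z1 s)]
    have hb := hB (w1 s - z1 s)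
    have n1 : ‖aq s‖ ≤ 2 * K := by
      have := norm_sub_le (Y (w0 s)) (Z (z0 s))
      have := b1 s hs.1
      have := b2 s hs.1
      simp only [aq]; linarith
    have n2 : ‖(ε₁ : ℂ) • Y (w1 s) - (ε₂ : ℂ) • Z (z1 s)‖ ≤ K * η₁ + K * η₂ := by
      refine (norm_sub_le _ _).trans ?_
      rw [norm_smul, norm_smul, Complex.norm_real, Complex.norm_real,
        Real.norm_of_nonneg hε₁.le, Real.norm_of_nonneg hε₂.le]
      exact add_le_add (b3 s hs.1) (b4 s hs.1)
    have n3 := (abs_le.1 (abs_ip_le (aq s) ((ε₁ : ℂ) • Y (w1 s) - (ε₂ : ℂ) • Z (z1 s)))).1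
    have n4 := mul_le_mul n1 n2 (norm_nonneg _) (by positivity)
    nlinarith)
  have hpos : 0 ≤ ip (aq t) (q t) := hS.pos _ (hq t)
  simp only [ip_self] at key
  have e : ip (aq 0) (q 0) = ip (Y (w0 0) - Z (z0 0))
    ((w0 0 - (ε₁ : ℂ) • Y (w0 0)) - (z0 0 - (ε₂ : ℂ) • Z (z0 0))) := rfl
  rw [← e]
  linarith
end

section
variable {H : Type*} [NormedAddCommGroup H] [InnerProductSpace ℂ H] [CompleteSpace H]

theorem rate_tendsto (K : ℝ) : Filter.Tendsto (fun N : ℕ => Real.sqrt (K / ((N : ℝ) + 1)))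
    Filter.atTop (nhds 0) := by
  have h1 : Filter.Tendsto (fun N : ℕ => K / ((N : ℝ) + 1)) Filter.atTop (nhds 0) := by
    have := (tendsto_one_div_add_atTop_nhds_zero_nat (𝕜 := ℝ)).const_mul K
    simpa [div_eq_mul_inv] using this
  have := h1.sqrt
  simpa using this

theorem lim_deriv (f g : ℕ → ℝ → H) (hf : ∀ N t, HasDerivAt (f N) (g N t) t)
    (hgc : ∀ N, Continuous (g N)) (a : H) (ha : ∀ N, f N 0 = a) (G : ℝ → H) (K : ℝ) (hK : 0 ≤ K)
    (hb : ∀ (N : ℕ) t, 0 ≤ t → ‖g N t - G t‖ ^ 2 ≤ K * (1 + t) / ((N : ℝ) + 1)) :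
    ContinuousOn G (Set.Ici 0) ∧ ∃ F : ℝ → H, F 0 = a ∧
      (∀ t, 0 ≤ t → HasDerivWithinAt F (G t) (Set.Ici 0) t) ∧
      ∀ t, 0 ≤ t → Filter.Tendsto (fun N => f N t) Filter.atTop (nhds (F t)) := by
  let E : ℝ → H := fun t => G (max t 0)
  have hbE : ∀ (R : ℝ) (N : ℕ) (t : ℝ), t ≤ R →
      ‖g N (max t 0) - E t‖ ≤ Real.sqrt (K * (1 + max R 0) / ((N : ℝ) + 1)) := by
    intro R N t htR
    apply Real.le_sqrt_of_sq_le
    refine (hb N _ (le_max_right _ _)).trans ?_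
    gcongr
  have hEc : Continuous E := by
    rw [continuous_iff_continuousAt]
    intro t
    have h1 : TendstoUniformlyOn (fun N s => g N (max s 0)) E Filter.atTop (Set.Iio (t + 1)) := by
      rw [Metric.tendstoUniformlyOn_iff]
      intro ε hε
      have := (rate_tendsto (K * (1 + max (t + 1) 0))).eventually (gt_mem_nhds hε)
      filter_upwards [this] with N hN s hs
      rw [dist_comm, dist_eq_norm]
      exact (hbE (t + 1) N s (le_of_lt hs)).trans_lt hN
    have h2 : ContinuousOn E (Set.Iio (t + 1)) := h1.continuousOn
      (Filter.Frequently.of_forall fun N =>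
        ((hgc N).comp (continuous_id.max continuous_const)).continuousOn)
    exact h2.continuousAt (Iio_mem_nhds (by linarith))
  have hEG : ∀ t, 0 ≤ t → E t = G t := fun t ht => by simp [E, max_eq_left ht]
  refine ⟨hEc.continuousOn.congr fun t ht => (hEG t ht).symm,
    fun t => a + ∫ s in (0:ℝ)..t, E s, by simp, fun t ht => ?_, fun t ht => ?_⟩
  · have h1 : HasDerivAt (fun t => ∫ s in (0:ℝ)..t, E s) (E t) t :=
      intervalIntegral.integral_hasDerivAt_right (hEc.intervalIntegrable _ _)
        hEc.stronglyMeasurable.stronglyMeasurableAtFilter hEc.continuousAt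
    rw [← hEG t ht]
    exact (h1.const_add a).hasDerivWithinAt
  · have h1 : ∀ N, f N t - (a + ∫ s in (0:ℝ)..t, E s) =
        ∫ s in (0:ℝ)..t, (g N (max s 0) - E s) := by
      intro N
      have h2 : ∫ s in (0:ℝ)..t, g N s = f N t - f N 0 :=
        intervalIntegral.integral_eq_sub_of_hasDerivAt (fun s _ => hf N s)
          ((hgc N).intervalIntegrable _ _)
      have h3 : ∫ s in (0:ℝ)..t, g N (max s 0) = ∫ s in (0:ℝ)..t, g N s := by
        apply intervalIntegral.integral_congr
        intro s hs
        rw [Set.uIcc_of_le ht] at hs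
        simp [max_eq_left hs.1]
      have hi : IntervalIntegrable (fun s => g N (max s 0)) MeasureTheory.volume 0 t :=
        ((hgc N).comp (continuous_id.max continuous_const)).intervalIntegrable _ _
      rw [intervalIntegral.integral_sub hi
        (hEc.intervalIntegrable _ _), h3, h2, ha]
      abel
    rw [tendsto_iff_norm_sub_tendsto_zero]
    have h4 := (rate_tendsto (K * (1 + max t 0))).mul_const |t - 0|
    rw [zero_mul] at h4
    refine squeeze_zero (fun _ => norm_nonneg _) (fun N => ?_) h4
    rw [h1]
    apply intervalIntegral.norm_integral_le_of_norm_le_const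
    intro s hs
    rw [Set.uIoc_of_le ht] at hs
    exact hbE t N s hs.2

theorem exists_lim (g : ℕ → ℝ → H) (K : ℝ)
    (hb : ∀ (N M : ℕ) t, 0 ≤ t → ‖g N t - g M t‖ ^ 2 ≤
      K * (1 + t) * (1 / ((N : ℝ) + 1) + 1 / ((M : ℝ) + 1))) :
    ∃ G : ℝ → H, (∀ (N : ℕ) t, 0 ≤ t → ‖g N t - G t‖ ^ 2 ≤ K * (1 + t) / ((N : ℝ) + 1)) ∧
      ∀ t, 0 ≤ t → Filter.Tendsto (fun N => g N t) Filter.atTop (nhds (G t)) := by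
  have h : ∀ t, ∃ y, 0 ≤ t → Filter.Tendsto (fun N => g N t) Filter.atTop (nhds y) := by
    intro t
    by_cases ht : 0 ≤ t
    · have : CauchySeq (fun N => g N t) := by
        rw [Metric.cauchySeq_iff']
        intro ε hε
        have h1 : Filter.Tendsto (fun N : ℕ => K * (1 + t) * (2 * (1 / ((N : ℝ) + 1)))) Filter.atTop
            (nhds 0) := by
          have := ((tendsto_one_div_add_atTop_nhds_zero_nat (𝕜 := ℝ)).const_mul 2).const_mul
            (K * (1 + t))
          simpa using this
        obtain ⟨N, hN⟩ := (h1.eventually (gt_mem_nhds (show 0 < ε ^ 2 by positivity))).exists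
        refine ⟨N, fun n hn => ?_⟩
        rw [dist_eq_norm]
        have h2 := hb n N t ht
        have hKt : 0 ≤ K * (1 + t) := by
          have := hb 0 0 t ht
          simp at this; linarith
        have h3 : 1 / ((n : ℝ) + 1) ≤ 1 / ((N : ℝ) + 1) := by
          have : (N : ℝ) ≤ n := by exact_mod_cast hn
          gcongr
        have h4 : ‖g n t - g N t‖ ^ 2 < ε ^ 2 := by nlinarith
        exact lt_of_pow_lt_pow_left₀ 2 hε.le h4
      obtain ⟨y, hy⟩ := cauchySeq_tendsto_of_complete this
      exact ⟨y, fun _ => hy⟩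
    · exact ⟨0, fun h => absurd h ht⟩
  choose G hG using h
  refine ⟨G, fun N t ht => ?_, hG⟩
  have h1 : Filter.Tendsto (fun M => ‖g N t - g M t‖ ^ 2) Filter.atTop (nhds (‖g N t - G t‖ ^ 2)) :=
    ((tendsto_const_nhds.sub (hG t ht)).norm).pow 2
  have h2 : Filter.Tendsto (fun M : ℕ => K * (1 + t) * (1 / ((N : ℝ) + 1) + 1 / ((M : ℝ) + 1)))
      Filter.atTop (nhds (K * (1 + t) * (1 / ((N : ℝ) + 1) + 0))) :=
    ((tendsto_one_div_add_atTop_nhds_zero_nat (𝕜 := ℝ)).const_add _).const_mul _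
  have := le_of_tendsto_of_tendsto' h1 h2 (fun M => hb N M t ht)
  rwa [add_zero, mul_one_div] at this

theorem PosSA.wave_exists {S : Submodule ℂ (H × H)} (hS : PosSA S) (B : H →L[ℂ] H)
    (hB : ∀ f, 0 ≤ ip (B f) f) (φ ψ₁ ψ₂ : H) (h₁ : (φ, ψ₁) ∈ S) (h₂ : (B φ, ψ₂) ∈ S) :
    ∃ u du ddu : ℝ → H, u 0 = 0 ∧ du 0 = φ ∧
      (∀ t, 0 ≤ t → HasDerivWithinAt u (du t) (Set.Ici 0) t) ∧
      (∀ t, 0 ≤ t → HasDerivWithinAt du (ddu t) (Set.Ici 0) t) ∧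
      ContinuousOn ddu (Set.Ici 0) ∧
      ∀ t, 0 ≤ t → (u t, - ddu t - B (du t)) ∈ S := by
  let η : ℕ → ℝ := fun N => 1 / ((N : ℝ) + 1)
  have hη : ∀ N, 0 < η N := fun N => by positivity
  have hη1 : ∀ N, η N ≤ 1 := fun N => by
    simp only [η]; rw [div_le_one (by positivity)]; linarith [(Nat.cast_nonneg N : (0:ℝ) ≤ N)]
  let ε : ℕ → ℝ := fun N => η N ^ 2
  have hε : ∀ N, 0 < ε N := fun N => pow_pos (hη N) 2
  have hεη : ∀ N, ε N ≤ η N := fun N => by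
    have := hη N; have := hη1 N; simp only [ε]; nlinarith
  choose Y hY hYb using fun N => hS.yosida (ε N) (hε N)
  choose w hw w00 w10 hw2 using fun N => bounded_ode (Y N) B 0 φ
  have hYs : ∀ N f g, ip (Y N f) g = ip f (Y N g) := fun N => hS.yosida_symm (hY N)
  have hYp : ∀ N f, ε N * ‖Y N f‖ ^ 2 ≤ ip (Y N f) f := fun N => hS.yosida_pos (hY N)
  have hYp0 : ∀ N f, 0 ≤ ip (Y N f) f := fun N f =>
    (mul_nonneg (hε N).le (sq_nonneg _)).trans (hYp N f)
  have hYφ : ∀ N, ‖Y N φ‖ ≤ ‖ψ₁‖ := fun N => hYb N _ h₁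
  have hYBφ : ∀ N, ‖Y N (B φ)‖ ≤ ‖ψ₂‖ := fun N => hYb N _ h₂
  have w20 : ∀ N, w N 2 0 = - B φ := fun N => by rw [hw2 N 0 0, w00, w10]; simp
  have w30 : ∀ N, w N 3 0 = - Y N φ + B (B φ) := fun N => by
    rw [hw2 N 1 0, w10, w20]; simp
  obtain ⟨K1, hK1, hE⟩ : ∃ K1 : ℝ, 0 ≤ K1 ∧ ∀ N, ∀ t, 0 ≤ t → ‖w N 1 t‖ ≤ K1 ∧ ‖w N 2 t‖ ≤ K1 ∧
      ‖w N 3 t‖ ≤ K1 ∧ ip (Y N (w N 2 t)) (w N 2 t) ≤ K1 ^ 2 := by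
    set e0 := ‖φ‖ ^ 2 with he0
    set e1 := ‖B φ‖ ^ 2 + ‖ψ₁‖ * ‖φ‖ with he1
    set e2 := (‖ψ₁‖ + ‖B (B φ)‖) ^ 2 + ‖ψ₂‖ * ‖B φ‖ with he2
    have p0 : 0 ≤ e0 := by positivity
    have p1 : 0 ≤ e1 := by positivity
    have p2 : 0 ≤ e2 := by positivity
    refine ⟨1 + e0 + e1 + e2, by positivity, fun N t ht => ?_⟩
    have a0 := energy_le (hYs N) hB (hw N 0) (hw N 1) (hw2 N 0) t ht
    have a1 := energy_le (hYs N) hB (hw N 1) (hw N 2) (hw2 N 1) t ht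
    have a2 := energy_le (hYs N) hB (hw N 2) (hw N 3) (hw2 N 2) t ht
    simp only [Nat.reduceAdd, zero_add] at a0 a1 a2
    rw [w00, w10, map_zero] at a0
    rw [w10, w20, norm_neg] at a1
    rw [w20, w30, map_neg, ip_neg_left, ip_neg_right, neg_neg] at a2
    have z : ip (0 : H) 0 = 0 := by simp [ip]
    rw [z] at a0
    have c1 : ip (Y N φ) φ ≤ ‖ψ₁‖ * ‖φ‖ :=
      (ip_le _ _).trans (mul_le_mul_of_nonneg_right (hYφ N) (norm_nonneg _))
    have c2 : ip (Y N (B φ)) (B φ) ≤ ‖ψ₂‖ * ‖B φ‖ :=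
      (ip_le _ _).trans (mul_le_mul_of_nonneg_right (hYBφ N) (norm_nonneg _))
    have c3 : ‖-Y N φ + B (B φ)‖ ≤ ‖ψ₁‖ + ‖B (B φ)‖ := by
      refine (norm_add_le _ _).trans ?_
      rw [norm_neg]; gcongr; exact hYφ N
    have c4 : ‖-Y N φ + B (B φ)‖ ^ 2 ≤ (‖ψ₁‖ + ‖B (B φ)‖) ^ 2 := by gcongr
    have d0 := hYp0 N (w N 0 t)
    have d1 := hYp0 N (w N 1 t)
    have d2 := hYp0 N (w N 2 t)
    have r0 : ‖w N 1 t‖ ^ 2 ≤ e0 := by linarith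
    have r1 : ‖w N 2 t‖ ^ 2 ≤ e1 := by linarith
    have r2 : ‖w N 3 t‖ ^ 2 ≤ e2 := by linarith
    have r3 : ip (Y N (w N 2 t)) (w N 2 t) ≤ e2 := by linarith [sq_nonneg ‖w N 3 t‖]
    refine ⟨by nlinarith [sq_nonneg (‖w N 1 t‖ - 1)], by nlinarith [sq_nonneg (‖w N 2 t‖ - 1)],
      by nlinarith [sq_nonneg (‖w N 3 t‖ - 1)], ?_⟩
    nlinarith
  set K := (1 + ‖B‖) * K1 with hKdef
  have hK : 0 ≤ K := by positivity
  have hK1K : K1 ≤ K := by rw [hKdef]; nlinarith [norm_nonneg B]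
  have bY : ∀ N k t, ‖w N (k + 1) t‖ ≤ K1 → ‖w N (k + 2) t‖ ≤ K1 → ‖Y N (w N k t)‖ ≤ K := by
    intro N k t i1 i2
    have : Y N (w N k t) = - w N (k + 2) t - B (w N (k + 1) t) := by rw [hw2]; abel
    rw [this]
    refine (norm_sub_le _ _).trans ?_
    rw [norm_neg, hKdef, add_mul, one_mul]
    exact add_le_add i2 ((B.le_opNorm _).trans (by gcongr))
  have bY0 : ∀ N t, 0 ≤ t → ‖Y N (w N 0 t)‖ ≤ K := fun N t ht =>
    bY N 0 t (hE N t ht).1 (hE N t ht).2.1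
  have bY1 : ∀ N t, 0 ≤ t → ‖Y N (w N 1 t)‖ ≤ K := fun N t ht =>
    bY N 1 t (hE N t ht).2.1 (hE N t ht).2.2.1
  have bεY1 : ∀ N t, 0 ≤ t → ε N * ‖Y N (w N 1 t)‖ ≤ K * η N := fun N t ht => by
    rw [mul_comm]
    exact mul_le_mul (bY1 N t ht) (hεη N) (hε N).le hK
  have bεY2 : ∀ N t, 0 ≤ t → ε N * ‖Y N (w N 2 t)‖ ≤ K * η N := fun N t ht => by
    have i1 := (hYp N (w N 2 t)).trans (hE N t ht).2.2.2
    have i2 : (η N * ‖Y N (w N 2 t)‖) ^ 2 ≤ K1 ^ 2 := by rw [mul_pow]; exact i1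
    have i3 : η N * ‖Y N (w N 2 t)‖ ≤ K1 := le_of_sq_le_sq i2 hK1
    have : ε N * ‖Y N (w N 2 t)‖ = η N * ‖Y N (w N 2 t)‖ * η N := by simp only [ε]; ring
    rw [this]
    exact mul_le_mul_of_nonneg_right (i3.trans hK1K) (hη N).le
  set C := 4 * K ^ 2 + 2 * ‖ψ₁‖ ^ 2 with hC
  have hC0 : 0 ≤ C := by positivity
  have q1 : ∀ (N M : ℕ) t, 0 ≤ t → ‖w N 1 t - w M 1 t‖ ^ 2 ≤
      C * (1 + t) * (1 / ((N : ℝ) + 1) + 1 / ((M : ℝ) + 1)) := by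
    intro N M t ht
    have := hS.pair_le (hε N) (hε M) (hY N) (hY M) hB (hw N 0) (hw N 1) (hw2 N 0) (hw M 0) (hw M 1)
      (hw2 M 0) hK (bY0 N) (bY0 M) (bεY1 N) (bεY1 M) t ht
    simp only [Nat.reduceAdd, zero_add] at this
    rw [w00, w00, w10, w10] at this
    have z : ip (0 : H) 0 = 0 := by simp [ip]
    simp only [map_zero, smul_zero, sub_self, norm_zero, z] at this
    change _ ≤ C * (1 + t) * (η N + η M)
    have e : 0 < η N + η M := add_pos (hη N) (hη M)
    have : 4 * K ^ 2 * t ≤ C * (1 + t) := by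
      rw [hC]; nlinarith [sq_nonneg K, sq_nonneg ‖ψ₁‖, mul_nonneg (sq_nonneg ‖ψ₁‖) ht]
    nlinarith
  have q2 : ∀ (N M : ℕ) t, 0 ≤ t → ‖w N 2 t - w M 2 t‖ ^ 2 ≤
      C * (1 + t) * (1 / ((N : ℝ) + 1) + 1 / ((M : ℝ) + 1)) := by
    intro N M t ht
    have := hS.pair_le (hε N) (hε M) (hY N) (hY M) hB (hw N 1) (hw N 2) (hw2 N 1) (hw M 1) (hw M 2)
      (hw2 M 1) hK (bY1 N) (bY1 M) (bεY2 N) (bεY2 M) t ht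
    simp only [Nat.reduceAdd] at this
    rw [w20, w20, w10, w10] at this
    simp only [sub_self, norm_zero] at this
    change _ ≤ C * (1 + t) * (η N + η M)
    have e : 0 < η N + η M := add_pos (hη N) (hη M)
    have e1 : ip (Y N φ - Y M φ) ((φ - (ε N : ℂ) • Y N φ) - (φ - (ε M : ℂ) • Y M φ)) ≤
        2 * ‖ψ₁‖ ^ 2 * (η N + η M) := by
      refine (ip_le _ _).trans ?_
      have f1 : ‖Y N φ - Y M φ‖ ≤ 2 * ‖ψ₁‖ := by
        refine (norm_sub_le _ _).trans ?_
        linarith [hYφ N, hYφ M]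
      have f2 : ‖(φ - (ε N : ℂ) • Y N φ) - (φ - (ε M : ℂ) • Y M φ)‖ ≤ ‖ψ₁‖ * (η N + η M) := by
        have : (φ - (ε N : ℂ) • Y N φ) - (φ - (ε M : ℂ) • Y M φ) =
          (ε M : ℂ) • Y M φ - (ε N : ℂ) • Y N φ := by abel
        rw [this]
        refine (norm_sub_le _ _).trans ?_
        rw [norm_smul, norm_smul, Complex.norm_real, Complex.norm_real,
          Real.norm_of_nonneg (hε N).le, Real.norm_of_nonneg (hε M).le]
        have g1 := mul_le_mul (hεη N) (hYφ N) (norm_nonneg _) (hη N).le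
        have g2 := mul_le_mul (hεη M) (hYφ M) (norm_nonneg _) (hη M).le
        linarith
      have := mul_le_mul f1 f2 (norm_nonneg _) (by positivity)
      linarith
    have : 2 * ‖ψ₁‖ ^ 2 + 4 * K ^ 2 * t ≤ C * (1 + t) := by
      rw [hC]; nlinarith [sq_nonneg K, sq_nonneg ‖ψ₁‖, mul_nonneg (sq_nonneg ‖ψ₁‖) ht]
    nlinarith
  obtain ⟨du, hdu, ldu⟩ := exists_lim (fun N => w N 1) C q1
  obtain ⟨ddu, hddu, lddu⟩ := exists_lim (fun N => w N 2) C q2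
  have cw : ∀ N k, Continuous (w N k) := fun N k =>
    continuous_iff_continuousAt.2 fun t => (hw N k t).continuousAt
  obtain ⟨-, u, hu0, hu', lu⟩ := lim_deriv (fun N => w N 0) (fun N => w N 1) (fun N => hw N 0)
    (fun N => cw N 1) 0 w00 du C hC0 hdu
  obtain ⟨cddu, du2, hdu20, hdu2', ldu2⟩ := lim_deriv (fun N => w N 1) (fun N => w N 2)
    (fun N => hw N 1) (fun N => cw N 2) φ w10 ddu C hC0 hddu
  have heq : ∀ t, 0 ≤ t → du t = du2 t := fun t ht => tendsto_nhds_unique (ldu t ht) (ldu2 t ht)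
  refine ⟨u, du, ddu, hu0, (heq 0 le_rfl).trans hdu20, hu', fun t ht => ?_, cddu, fun t ht => ?_⟩
  · exact (hdu2' t ht).congr (fun s hs => heq s hs) (heq t ht)
  · have l1 : Filter.Tendsto (fun N => Y N (w N 0 t)) Filter.atTop (nhds (- ddu t - B (du t))) := by
      have e : (fun N => Y N (w N 0 t)) = fun N => - w N 2 t - B (w N 1 t) := by
        funext N; rw [hw2 N 0 t]; simp
      rw [e]
      exact (lddu t ht).neg.sub ((B.continuous.tendsto _).comp (ldu t ht))
    have l2 : Filter.Tendsto ε Filter.atTop (nhds 0) := by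
      have := (tendsto_one_div_add_atTop_nhds_zero_nat (𝕜 := ℝ)).pow 2
      rw [zero_pow two_ne_zero] at this
      exact this
    have l3 : Filter.Tendsto (fun N => w N 0 t - (ε N : ℂ) • Y N (w N 0 t)) Filter.atTop
        (nhds (u t)) := by
      have l4 : Filter.Tendsto (fun N => (ε N : ℂ)) Filter.atTop (nhds ((0 : ℝ) : ℂ)) :=
        (Complex.continuous_ofReal.tendsto 0).comp l2
      have := (lu t ht).sub (l4.smul l1)
      simpa using this
    exact hS.closed.mem_of_tendsto (l3.prodMk_nhds l1)
      (Filter.Eventually.of_forall fun N => hY N (w N 0 t))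
end

section
variable {H : Type*} [NormedAddCommGroup H] [InnerProductSpace ℂ H] [CompleteSpace H]

theorem heat_bounded (L : H →L[ℂ] H) (l δ : ℝ) (hl : 0 < l) (hδ : 0 ≤ δ) (hδ1 : δ ≤ 1)
    (hN : ∀ f, ‖L f - (l : ℂ) • f‖ ≤ δ * l * ‖f‖) (x : H) :
    ∃ v : ℝ → H, v 0 = x ∧ (∀ t, HasDerivAt v (- L (v t)) t) ∧
      (∀ K : H →L[ℂ] H, Commute K L → K x = x → ∀ t, K (v t) = v t) ∧
      ∀ t, 0 ≤ t → t ≤ 2 / l → ‖v t - ((Real.exp (-(l * t)) : ℝ) : ℂ) • x‖ ≤ δ * ‖x‖ := by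
  let v : ℝ → H := fun t => (NormedSpace.exp (t • (-L))) x
  have hv0 : v 0 = x := by simp [v]
  have hv : ∀ t, HasDerivAt v (- L (v t)) t := by
    intro t
    have h1 := hasDerivAt_exp_smul_const' (𝕂 := ℝ) (-L) t
    have h2 := ((ContinuousLinearMap.apply ℂ H x).restrictScalars ℝ).hasFDerivAt.comp_hasDerivAt t h1
    exact h2
  refine ⟨v, hv0, hv, fun K hK hKx t => ?_, fun t ht ht2 => ?_⟩
  · have h1 : Commute K (NormedSpace.exp (t • (-L))) := (hK.neg_right.smul_right t).exp_right
    have := congrArg (fun Z : H →L[ℂ] H => Z x) h1.eq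
    change K (v t) = (NormedSpace.exp (t • (-L))) (K x) at this
    rw [this, hKx]
  · have hvn : ∀ s, 0 ≤ s → ‖v s‖ ≤ ‖x‖ := by
      intro s hs
      have h1 := mvt_le (f := fun t => ip (v t) (v t))
        (f' := fun t => ip (v t) (- L (v t)) + ip (- L (v t)) (v t)) (C := 0) hs
        (fun r _ => ip_hasDerivAt (hv r) (hv r)) (fun r _ => by
          have a1 := abs_ip_le (L (v r) - (l : ℂ) • v r) (v r)
          rw [ip_sub_left, ip_smul_left, ip_self] at a1
          have a2 := hN (v r)
          have a3 := (abs_le.1 a1).1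
          have a4 : ‖L (v r) - (l : ℂ) • v r‖ * ‖v r‖ ≤ δ * l * ‖v r‖ * ‖v r‖ := by gcongr
          have a5 : δ * l * ‖v r‖ * ‖v r‖ ≤ 1 * l * ‖v r‖ * ‖v r‖ := by gcongr
          simp only [ip_neg_left, ip_neg_right]
          rw [ip_comm (v r)]
          nlinarith)
      simp only [ip_self, hv0] at h1
      exact le_of_sq_le_sq (by linarith) (norm_nonneg _)
    let e : ℝ → ℝ := fun t => Real.exp (-(l * t))
    have he : ∀ s, HasDerivAt e (-(l * e s)) s := by
      intro s
      have := ((((hasDerivAt_id s).const_mul l).neg).exp)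
      refine this.congr_deriv ?_
      simp [e]; ring
    let w : ℝ → H := fun t => v t - ((e t : ℝ) : ℂ) • x
    have hw : ∀ s, HasDerivAt w (-((l : ℂ) • w s) - (L (v s) - (l : ℂ) • v s)) s := by
      intro s
      have := (hv s).sub (((he s).ofReal_comp).smul_const x)
      refine this.congr_deriv ?_
      simp only [w, smul_sub, smul_smul]
      push_cast
      module
    have h1 := mvt_le (f := fun t => ip (w t) (w t)) (f' := fun s => ip (w s) _ + ip _ (w s))
      (C := l * δ ^ 2 * ‖x‖ ^ 2 / 2) ht
      (fun r _ => ip_hasDerivAt (hw r) (hw r)) (fun r hr => by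
        have a1 := abs_ip_le (L (v r) - (l : ℂ) • v r) (w r)
        have a2 := hN (v r)
        have a3 := (abs_le.1 a1).1
        have a6 := hvn r hr.1
        have a4 : ‖L (v r) - (l : ℂ) • v r‖ * ‖w r‖ ≤ δ * l * ‖x‖ * ‖w r‖ := by
          refine mul_le_mul_of_nonneg_right (a2.trans ?_) (norm_nonneg _)
          gcongr
        simp only [ip_sub_right (w r) (-((l : ℂ) • w r)), ip_sub_left (-((l : ℂ) • w r)),
          ip_neg_left, ip_neg_right, ip_smul_left, ip_smul_right, ip_self]
        rw [ip_comm (w r)]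
        have : 0 ≤ l * (2 * ‖w r‖ - δ * ‖x‖) ^ 2 := by positivity
        nlinarith)
    have hw0 : w 0 = 0 := by simp [w, e, hv0]
    simp only [ip_self, hw0, norm_zero] at h1
    have h2 : l * t ≤ 2 := by rw [le_div_iff₀ hl] at ht2; linarith
    have h3 : l * δ ^ 2 * ‖x‖ ^ 2 / 2 * (t - 0) ≤ (δ * ‖x‖) ^ 2 := by
      have : 0 ≤ δ ^ 2 * ‖x‖ ^ 2 := by positivity
      nlinarith
    exact le_of_sq_le_sq (show ‖w t‖ ^ 2 ≤ _ by nlinarith) (by positivity)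

/-- Scalar window lemma. -/
theorem window {l α S1 S2 S3 : ℝ} (hl : 0 < l) (hα : 0 ≤ α) {a a' a'' b b' : ℝ → ℝ}
    (ha : ∀ t ∈ Set.Icc (1 / l) (2 / l), HasDerivAt a (a' t) t)
    (ha' : ∀ t ∈ Set.Icc (1 / l) (2 / l), HasDerivAt a' (a'' t) t)
    (hb : ∀ t ∈ Set.Icc (1 / l) (2 / l), HasDerivAt b (b' t) t)
    (h1 : ∀ t ∈ Set.Icc (1 / l) (2 / l), |b t| ≤ S1 * l)
    (h2 : ∀ t ∈ Set.Icc (1 / l) (2 / l), |a'' t + b' t + l * b t| ≤ S2 * l ^ 2)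
    (h3 : ∀ t ∈ Set.Icc (1 / l) (2 / l), |a t - α * Real.exp (-(l * t))| ≤ S3) :
    α * Real.exp (-2) / 30 ≤ 2 * S1 + S2 + 2 * S3 := by
  let h : ℝ → ℝ := fun s => (s - 1) ^ 2 * (2 - s) ^ 2
  let hd : ℝ → ℝ := fun s => 2 * (s - 1) * (2 - s) * (3 - 2 * s)
  let hdd : ℝ → ℝ := fun s => 2 * (3 - 2 * s) ^ 2 - 4 * (s - 1) * (2 - s)
  let q : ℝ → ℝ := fun s => (s - 1) ^ 3 / 3 - (s - 1) ^ 4 / 2 + (s - 1) ^ 5 / 5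
  have dl : ∀ t : ℝ, HasDerivAt (fun t => l * t) l t := fun t => by
    simpa using (hasDerivAt_id t).const_mul l
  have dh : ∀ t, HasDerivAt (fun t => h (l * t)) (l * hd (l * t)) t := fun t => by
    have := (((dl t).sub_const 1).pow 2).mul (((dl t).const_sub 2).pow 2)
    refine this.congr_deriv ?_
    simp [hd]; ring
  have dhd : ∀ t, HasDerivAt (fun t => hd (l * t)) (l * hdd (l * t)) t := fun t => by
    have := ((((dl t).sub_const 1).const_mul 2).mul ((dl t).const_sub 2)).mul
      (((dl t).const_mul 2).const_sub 3)
    refine this.congr_deriv ?_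
    simp [hdd]; ring
  have dq : ∀ t, HasDerivAt (fun t => q (l * t)) (l * h (l * t)) t := fun t => by
    have := (((((dl t).sub_const 1).pow 3).div_const 3).sub
      ((((dl t).sub_const 1).pow 4).div_const 2)).add ((((dl t).sub_const 1).pow 5).div_const 5)
    refine this.congr_deriv ?_
    simp [h]; ring
  let e : ℝ → ℝ := fun t => Real.exp (-(l * t))
  have de : ∀ s, HasDerivAt e (-(l * e s)) s := by
    intro s
    have := ((((hasDerivAt_id s).const_mul l).neg).exp)
    refine this.congr_deriv ?_
    simp [e]; ring
  have hab : 1 / l ≤ 2 / l := by gcongr; norm_num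
  have key := mvt_le (f := fun t => h (l * t) * b t + h (l * t) * a' t - l * hd (l * t) * a t
      + α * ((l * hd (l * t) + l * h (l * t)) * e t) + α * l * Real.exp (-2) * q (l * t))
    (f' := fun t => (l * hd (l * t) * b t + h (l * t) * b' t) +
      (l * hd (l * t) * a' t + h (l * t) * a'' t) -
      (l * (l * hdd (l * t)) * a t + l * hd (l * t) * a' t) +
      α * ((l * (l * hdd (l * t)) + l * (l * hd (l * t))) * e t +
        (l * hd (l * t) + l * h (l * t)) * (-(l * e t))) +
      α * l * Real.exp (-2) * (l * h (l * t)))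
    (C := l ^ 2 * (2 * S1 + S2 + 2 * S3)) hab
    (fun t ht => (((((dh t).mul (hb t ht)).add ((dh t).mul (ha' t ht))).sub
      (((dhd t).const_mul l).mul (ha t ht))).add
      (((((dhd t).const_mul l).add ((dh t).const_mul l)).mul (de t)).const_mul α)).add
      ((dq t).const_mul _)) ?_
  · have e1 : l * (1 / l) = 1 := by field_simp
    have e2 : l * (2 / l) = 2 := by field_simp
    have e3 : l ^ 2 * (2 * S1 + S2 + 2 * S3) * (2 / l - 1 / l) = l * (2 * S1 + S2 + 2 * S3) := by
      field_simp; ring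
    rw [e3] at key
    simp only [e1, e2, h, hd, q] at key
    norm_num at key
    have : l * (α * Real.exp (-2) / 30) ≤ l * (2 * S1 + S2 + 2 * S3) := by linarith
    exact le_of_mul_le_mul_left this hl
  · intro t ht
    have m1 : 1 ≤ l * t := by have := ht.1; rw [div_le_iff₀ hl] at this; linarith
    have m2 : l * t ≤ 2 := by have := ht.2; rw [le_div_iff₀ hl] at this; linarith
    have g1 := h1 t ht
    have g2 := h2 t ht
    have g3 := h3 t ht
    have g4 : Real.exp (-2) ≤ e t := Real.exp_le_exp.2 (by linarith)
    generalize Real.exp (-2) = e0 at *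
    change |a t - α * e t| ≤ S3 at g3
    generalize l * t = s at *
    have hp : 0 ≤ (s - 1) * (2 - s) := mul_nonneg (by linarith) (by linarith)
    have hp1 : (s - 1) * (2 - s) ≤ 1 / 4 := by nlinarith [sq_nonneg (2 * s - 3)]
    have b0 : 0 ≤ h s := by simp only [h]; positivity
    have b1 : h s ≤ 1 := by
      have : h s = ((s - 1) * (2 - s)) ^ 2 := by simp only [h]; ring
      rw [this]; nlinarith
    have b2 : |hd s| ≤ 1 := by
      rw [abs_le]; simp only [hd]
      constructor <;> nlinarith
    have b3 : |hdd s| ≤ 2 := by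
      rw [abs_le]; simp only [hdd]
      constructor <;> nlinarith
    generalize h s = x at *
    generalize hd s = y at *
    generalize hdd s = z at *
    have k1 : l * ((y - x) * b t) ≤ l * (2 * (S1 * l)) := by
      have : |(y - x) * b t| ≤ 2 * (S1 * l) := by
        rw [abs_mul]
        refine mul_le_mul ?_ g1 (abs_nonneg _) (by norm_num)
        rw [abs_le] at b2 ⊢; constructor <;> linarith [b2.1, b2.2]
      exact mul_le_mul_of_nonneg_left ((le_abs_self _).trans this) hl.le
    have k2 : x * (a'' t + b' t + l * b t) ≤ S2 * l ^ 2 := by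
      have : |x * (a'' t + b' t + l * b t)| ≤ 1 * (S2 * l ^ 2) := by
        rw [abs_mul, abs_of_nonneg b0]
        exact mul_le_mul b1 g2 (abs_nonneg _) (by norm_num)
      linarith [le_abs_self (x * (a'' t + b' t + l * b t))]
    have k3 : - (z * (a t - α * e t)) ≤ 2 * S3 := by
      have : |z * (a t - α * e t)| ≤ 2 * S3 := by
        rw [abs_mul]
        exact mul_le_mul b3 g3 (abs_nonneg _) (by norm_num)
      linarith [neg_abs_le (z * (a t - α * e t))]
    have k4 : 0 ≤ α * (l ^ 2 * (x * (e t - e0))) :=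
      mul_nonneg hα (mul_nonneg (by positivity) (mul_nonneg b0 (by linarith)))
    have k5 := mul_le_mul_of_nonneg_left k3 (show 0 ≤ l ^ 2 by positivity)
    nlinarith
end

section
variable {H : Type*} [NormedAddCommGroup H] [InnerProductSpace ℂ H] [CompleteSpace H]

theorem spectral_pt (R : H →L[ℂ] H) (hR : IsSelfAdjoint R) (hR1 : ‖R‖ ≤ 1)
    (hker : ∀ z, R z = z → z = 0) (z : ℕ → H) (κ : ℝ) (hκ : 0 < κ) (hz : ∀ n, κ ≤ ‖z n‖)
    (hz' : Filter.Tendsto (fun n => ‖z n - R (z n)‖) Filter.atTop (nhds 0)) (ε : ℝ) (hε : 0 < ε) :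
    ∃ r ∈ spectrum ℝ R, 1 - ε < r ∧ r < 1 := by
  by_contra hcon
  push Not at hcon
  have hle : ∀ r ∈ spectrum ℝ R, r ≤ 1 := by
    intro r hr
    have : Nontrivial (H →L[ℂ] H) := by
      by_contra h
      rw [not_nontrivial_iff_subsingleton] at h
      rw [spectrum.of_subsingleton] at hr
      exact hr
    have := spectrum.norm_le_norm_of_mem hr
    exact (le_abs_self r).trans (this.trans hR1)
  let g : ℝ → ℝ := fun r => max 0 (r - (1 - ε))
  have hg : Continuous g := by fun_prop
  have hgR : R * cfc g R = cfc g R := by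
    conv_lhs => enter [1]; rw [← cfc_id' ℝ R hR]
    rw [← cfc_mul (fun r : ℝ => r) g R (by fun_prop) hg.continuousOn]
    apply cfc_congr
    intro r hr
    simp only [g]
    rcases le_or_gt r (1 - ε) with h | h
    · rw [max_eq_left (by linarith)]; simp
    · have h1 := hcon r hr h
      have : r = 1 := le_antisymm (hle r hr) h1
      rw [this]; simp
  have hg0 : cfc g R = 0 := by
    ext y
    exact hker _ (congrArg (fun Z : H →L[ℂ] H => Z y) hgR)
  have hsp : ∀ r ∈ spectrum ℝ R, r ≤ 1 - ε := by
    intro r hr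
    have := norm_apply_le_norm_cfc g R hr hg.continuousOn hR
    rw [hg0, norm_zero] at this
    have h0 : g r = 0 := norm_le_zero_iff.1 this
    have : r - (1 - ε) ≤ g r := le_max_right _ _
    linarith
  let k : ℝ → ℝ := fun r => (max (1 - r) ε)⁻¹
  have hk : Continuous k := by
    refine Continuous.inv₀ (by fun_prop) (fun r => ?_)
    have : ε ≤ max (1 - r) ε := le_max_right _ _
    linarith
  have hinv : cfc k R * (1 - R) = 1 := by
    have e1 : (1 : H →L[ℂ] H) - R = cfc (fun r : ℝ => 1 - r) R := by
      rw [cfc_sub (fun _ : ℝ => (1:ℝ)) (fun r : ℝ => r) R (by fun_prop) (by fun_prop),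
        cfc_id' ℝ R hR, cfc_const_one ℝ R hR]
    rw [e1, ← cfc_mul k _ R hk.continuousOn (by fun_prop), ← cfc_const_one ℝ R hR]
    apply cfc_congr
    intro r hr
    have := hsp r hr
    simp only [k]
    rw [max_eq_left (by linarith)]
    exact inv_mul_cancel₀ (by linarith)
  have hb : ∀ n, κ ≤ ‖cfc k R‖ * ‖z n - R (z n)‖ := by
    intro n
    refine (hz n).trans ?_
    have : z n = cfc k R (z n - R (z n)) :=
      (congrArg (fun Z : H →L[ℂ] H => Z (z n)) hinv).symm
    conv_lhs => rw [this]
    exact ContinuousLinearMap.le_opNorm _ _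
  have h2 := ge_of_tendsto' (hz'.const_mul ‖cfc k R‖) hb
  rw [mul_zero] at h2
  linarith

theorem spectral_piece (R : H →L[ℂ] H) (hR : IsSelfAdjoint R) (hR1 : ‖R‖ ≤ 1)
    (hker : ∀ z, R z = z → z = 0) (z : ℕ → H) (κ : ℝ) (hκ : 0 < κ) (hz : ∀ n, κ ≤ ‖z n‖)
    (hz' : Filter.Tendsto (fun n => ‖z n - R (z n)‖) Filter.atTop (nhds 0)) (l₀ δ : ℝ)
    (hl₀ : 0 < l₀) (hδ : 0 < δ) :
    ∃ l : ℝ, 0 < l ∧ l < l₀ ∧ ∃ L : H →L[ℂ] H, (∀ f, ‖L f - (l : ℂ) • f‖ ≤ δ * l * ‖f‖) ∧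
      Commute R L ∧ ∃ x, x ≠ 0 ∧ R (x + L x) = x := by
  obtain ⟨r, hr, hr1, hr2⟩ := spectral_pt R hR hR1 hker z κ hκ hz hz' (min (1/2) (l₀ / 4))
    (by positivity)
  have m1 := min_le_left (1/2) (l₀ / 4)
  have m2 := min_le_right (1/2) (l₀ / 4)
  have hr0 : 1 / 2 < r := by linarith
  set l : ℝ := r⁻¹ - 1 with hl
  have hl' : l * r = 1 - r := by rw [hl, sub_mul, inv_mul_cancel₀ (by linarith)]; ring
  have hlp : 0 < l := by
    rw [hl, sub_pos]; exact (one_lt_inv₀ (by linarith)).2 hr2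
  have hll : l < l₀ := by nlinarith
  obtain ⟨η, hη, hη1, hη2⟩ : ∃ η : ℝ, 0 < η ∧ η ≤ 1/4 ∧ η ≤ δ * l / 8 :=
    ⟨min (1/4) (δ * l / 8), by positivity, min_le_left _ _, min_le_right _ _⟩
  let ρ : ℝ → ℝ := fun s => max (r - η) (min s (r + η))
  have ρ1 : ∀ s, r - η ≤ ρ s := fun s => le_max_left _ _
  have ρ2 : ∀ s, ρ s ≤ r + η := fun s => max_le (by linarith) (min_le_right _ _)
  have ρp : ∀ s, 1 / 4 ≤ ρ s := fun s => by have := ρ1 s; linarith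
  let ℓ : ℝ → ℝ := fun s => (ρ s)⁻¹ - 1
  have hℓ : Continuous ℓ := by
    refine (Continuous.inv₀ (by fun_prop) (fun s => ?_)).sub continuous_const
    have := ρp s; linarith
  let g : ℝ → ℝ := fun s => max 0 (η - |s - r|)
  have hg : Continuous g := by fun_prop
  have hgne : cfc g R ≠ 0 := by
    intro h0
    have := norm_apply_le_norm_cfc g R hr hg.continuousOn hR
    rw [h0, norm_zero] at this
    have h1 : g r = 0 := norm_le_zero_iff.1 this
    simp [g] at h1
    linarith
  obtain ⟨y, hy⟩ : ∃ y, cfc g R y ≠ 0 := by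
    by_contra h
    push Not at h
    exact hgne (by ext y; exact h y)
  refine ⟨l, hlp, hll, cfc ℓ R, ?_, ?_, cfc g R y, hy, ?_⟩
  · intro f
    have e1 : cfc ℓ R - (l : ℂ) • (1 : H →L[ℂ] H) = cfc (fun s => ℓ s - l) R := by
      rw [cfc_sub ℓ (fun _ : ℝ => l) R hℓ.continuousOn (by fun_prop), cfc_const l R hR,
        Algebra.algebraMap_eq_smul_one]
      rfl
    have e2 : ‖cfc (fun s => ℓ s - l) R‖ ≤ δ * l := by
      apply norm_cfc_le (by positivity)
      intro s _
      have p := ρp s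
      have : ℓ s - l = (r - ρ s) / (ρ s * r) := by
        simp only [ℓ, hl]
        have : ρ s ≠ 0 := by linarith
        have : r ≠ 0 := by linarith
        field_simp
        ring
      rw [this, Real.norm_eq_abs, abs_div, abs_of_pos (show 0 < ρ s * r by nlinarith),
        div_le_iff₀ (by nlinarith)]
      have a1 : |r - ρ s| ≤ η := by
        rw [abs_le]; constructor <;> linarith [ρ1 s, ρ2 s]
      have a2 : 1 / 8 ≤ ρ s * r := by nlinarith
      have a3 : 0 < δ * l := by positivity
      nlinarith
    calc _ = ‖(cfc ℓ R - (l : ℂ) • (1 : H →L[ℂ] H)) f‖ := by simp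
      _ ≤ _ := by
        rw [e1]
        refine (ContinuousLinearMap.le_opNorm _ _).trans ?_
        gcongr
  · have := cfc_commute_cfc (R := ℝ) (fun s => s) ℓ R
    rwa [cfc_id' ℝ R hR] at this
  · have e1 : R * ((1 + cfc ℓ R) * cfc g R) = cfc g R := by
      rw [← cfc_const_one ℝ R hR, ← cfc_add (a := R) (fun _ => (1:ℝ)) ℓ (by fun_prop) hℓ.continuousOn,
        ← cfc_mul _ _ R (by fun_prop) hg.continuousOn]
      conv_lhs => enter [1]; rw [← cfc_id' ℝ R hR]
      rw [← cfc_mul _ _ R (by fun_prop) (by fun_prop)]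
      apply cfc_congr
      intro s _
      simp only [g, ℓ]
      rcases le_or_gt (η - |s - r|) 0 with h | h
      · rw [max_eq_left h]; simp
      · have h' : |s - r| < η := by linarith
        rw [abs_lt] at h'
        have hρ : ρ s = s := by
          simp only [ρ]; rw [min_eq_left (by linarith), max_eq_right (by linarith)]
        rw [hρ]
        have : s ≠ 0 := by linarith
        field_simp
        ring
    exact congrArg (fun Z : H →L[ℂ] H => Z y) e1
end

section
variable {H : Type*} [NormedAddCommGroup H] [InnerProductSpace ℂ H] [CompleteSpace H]

theorem core {S : Submodule ℂ (H × H)} (hS : PosSA S) (hstrict : ∀ p ∈ S, p.2 = 0 → p.1 = 0)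
    (Bh Binvh : H →L[ℂ] H) (hsym : ∀ f g, ⟪Bh f, g⟫ = ⟪f, Bh g⟫)
    (hi1 : ∀ f, Binvh (Bh f) = f) (hi2 : ∀ f, Bh (Binvh f) = f) (c : ℝ) (hc : 0 < c)
    (hpos : ∀ f, c * ‖f‖ ^ 2 ≤ (⟪Bh (Bh f), f⟫).re)
    (hD : ∀ p ∈ S, ∃ q, (Bh p.1, q) ∈ S) (p : ℕ → H × H) (hp : ∀ n, p n ∈ S)
    (hp1 : ∀ n, ‖(p n).1‖ = 1)
    (hp0 : Filter.Tendsto (fun n => ‖(p n).2‖) Filter.atTop (nhds 0)) :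
    ∃ c₀ > (0:ℝ), ∀ T > (0:ℝ), ∃ t > T, ∃ u du ddu v dv : ℝ → H,
      u 0 = 0 ∧ ‖du 0‖ ≤ 1 ∧ v 0 = Binvh (du 0) ∧
      (∀ t, 0 ≤ t → HasDerivWithinAt u (du t) (Set.Ici 0) t) ∧
      (∀ t, 0 ≤ t → HasDerivWithinAt du (ddu t) (Set.Ici 0) t) ∧
      ContinuousOn ddu (Set.Ici 0) ∧
      (∀ t, 0 ≤ t → (u t, - ddu t - Bh (Bh (du t))) ∈ S) ∧
      (∀ t, HasDerivAt v (dv t) t) ∧ Continuous dv ∧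
      (∀ t, (Binvh (v t), - Bh (dv t)) ∈ S) ∧
      c₀ ≤ t * ‖u t - Binvh (v t)‖ := by
  obtain ⟨G, hG1, hG2, hG3⟩ := hS.resolvent (Bh ∘L Bh)
    (fun x y => by simp only [ContinuousLinearMap.comp_apply]; rw [hsym, hsym]) c hc hpos
  simp only [ContinuousLinearMap.comp_apply] at hG1 hG2
  have hsi : ∀ f g, ip (Bh f) g = ip f (Bh g) := fun f g => congrArg Complex.re (hsym f g)
  have hGs : ∀ f g, ⟪G f, g⟫ = ⟪f, G g⟫ := by
    intro f g
    have h1 := hS.symm _ (hG1 f) _ (hG1 g)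
    simp only [inner_sub_left, inner_sub_right] at h1
    rw [hsym, hsym (G f), ← hsym (G f)] at h1
    rw [hsym] at h1
    exact (sub_left_inj.1 h1).symm
  let R : H →L[ℂ] H := Bh ∘L G ∘L Bh
  have hRa : ∀ f, R f = Bh (G (Bh f)) := fun f => rfl
  have hR : IsSelfAdjoint R := by
    rw [ContinuousLinearMap.isSelfAdjoint_iff_isSymmetric]
    intro f g
    change ⟪R f, g⟫ = ⟪f, R g⟫
    rw [hRa, hRa, hsym, hGs, hsym]
  have hR1 : ‖R‖ ≤ 1 := by
    refine ContinuousLinearMap.opNorm_le_bound _ zero_le_one fun f => ?_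
    have h1 : 0 ≤ ip (Bh f - Bh (Bh (G (Bh f)))) (G (Bh f)) := hS.pos _ (hG1 (Bh f))
    rw [ip_sub_left, hsi, hsi (Bh _), ← hRa, ip_self] at h1
    have h2 := ip_le f (R f)
    rw [one_mul]
    by_contra h
    push Not at h
    nlinarith [norm_nonneg f, norm_nonneg (R f)]
  -- points with `R z = z`-type identities lie in the domain
  have hdom : ∀ f g, R (f + g) = f → (Binvh f, Bh g) ∈ S := by
    intro f g h
    have h1 := hG1 (Bh (f + g))
    have h2 : G (Bh (f + g)) = Binvh f := by rw [← hi1 (G (Bh (f + g))), ← hRa, h]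
    rw [h2, hi2, map_add, add_sub_cancel_left] at h1
    exact h1
  have hker : ∀ z, R z = z → z = 0 := by
    intro z hz
    have := hstrict _ (hdom z 0 (by rw [add_zero, hz])) (by simp)
    rw [← hi2 z]
    simp only at this
    rw [this, map_zero]
  set K : ℝ := 1 + ‖Bh‖ + ‖Binvh‖ with hK
  have hK1 : 1 ≤ K := by have := norm_nonneg Bh; have := norm_nonneg Binvh; linarith
  have hK0 : 0 < K := by linarith
  have hKB : ∀ f, ‖Bh f‖ ≤ K * ‖f‖ := fun f => by
    refine (Bh.le_opNorm f).trans ?_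
    gcongr
    have := norm_nonneg Binvh; linarith
  have hKI : ∀ f, ‖Binvh f‖ ≤ K * ‖f‖ := fun f => by
    refine (Binvh.le_opNorm f).trans ?_
    gcongr
    have := norm_nonneg Bh; linarith
  let z : ℕ → H := fun n => Bh (p n).1
  have hz : ∀ n, K⁻¹ ≤ ‖z n‖ := fun n => by
    have := hKI (z n)
    simp only [z] at this ⊢
    rw [hi1, hp1] at this
    rwa [inv_le_iff_one_le_mul₀' hK0]
  have hz' : Filter.Tendsto (fun n => ‖z n - R (z n)‖) Filter.atTop (nhds 0) := by
    have h1 := hp0.const_mul ‖Bh ∘L G‖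
    rw [mul_zero] at h1
    refine squeeze_zero (fun _ => norm_nonneg _) (fun n => ?_) h1
    have h2 := hG2 _ (hp n)
    have h3 : z n - R (z n) = (Bh ∘L G) (p n).2 := by
      simp only [z, hRa, ContinuousLinearMap.comp_apply]
      conv_lhs => enter [1]; rw [← h2]
      rw [← map_sub, ← map_sub, add_sub_cancel_right]
    rw [h3]
    exact ContinuousLinearMap.le_opNorm _ _
  let m : ℝ := Real.exp (-2) / (240 * K ^ 4)
  have hm : 0 < m := by positivity
  have hm1 : m ≤ 1 := by
    have h1 : Real.exp (-2) ≤ 1 := Real.exp_le_one_iff.2 (by norm_num)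
    have h2 : 1 ≤ K ^ 4 := one_le_pow₀ hK1
    simp only [m]
    rw [div_le_one (by positivity)]
    linarith
  refine ⟨m, hm, fun T hT => ?_⟩
  obtain ⟨l, hl, hlT, L, hL, hRL, x', hx'0, hx'⟩ := spectral_piece R hR hR1 hker z K⁻¹
    (by positivity) hz hz' (min 1 T⁻¹) m (by positivity) hm
  have hl1 : l ≤ 1 := hlT.le.trans (min_le_left _ _)
  have hl2 : T < 1 / l := by
    have : l < T⁻¹ := hlT.trans_le (min_le_right _ _)
    rw [one_div]
    exact (lt_inv_comm₀ hT hl).2 this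
  -- normalise
  obtain ⟨x, hx, hxn⟩ : ∃ x, R (x + L x) = x ∧ ‖x‖ = K⁻¹ := by
    have hn : 0 < ‖x'‖ := norm_pos_iff.2 hx'0
    refine ⟨((K⁻¹ * ‖x'‖⁻¹ : ℝ) : ℂ) • x', ?_, ?_⟩
    · rw [map_smul, ← smul_add, map_smul, hx']
    · rw [norm_smul, Complex.norm_real, Real.norm_of_nonneg (by positivity)]
      field_simp
  obtain ⟨v, hv0, hv, hvK, hvb⟩ := heat_bounded L l m hl hm.le hm1 hL x
  have hvR : ∀ t, R (v t + L (v t)) = v t := by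
    have hcomm : Commute (R * (1 + L)) L :=
      hRL.mul_left ((Commute.one_left L).add_left (Commute.refl L))
    exact hvK (R * (1 + L)) hcomm hx
  have hvS : ∀ t, (Binvh (v t), Bh (L (v t))) ∈ S := fun t => hdom _ _ (hvR t)
  -- wave data
  obtain ⟨q0, hq0⟩ : ∃ q, (x, q) ∈ S := by
    obtain ⟨q, hq⟩ := hD _ (hG1 (Bh (x + L x)))
    refine ⟨q, ?_⟩
    have : Bh (G (Bh (x + L x))) = x := hx
    simpa only [this] using hq
  obtain ⟨q1, hq1⟩ := hD _ hq0
  obtain ⟨q2, hq2⟩ := hD _ hq1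
  obtain ⟨q3, hq3⟩ := hD _ hq2
  have hBp : ∀ f, 0 ≤ ip ((Bh ∘L Bh) f) f := fun f =>
    (mul_nonneg hc.le (sq_nonneg _)).trans (hpos f)
  obtain ⟨u, du, ddu, hu0, hdu0, hu, hdu, hcd, huS⟩ :=
    hS.wave_exists (Bh ∘L Bh) hBp (Bh x) q1 q3 hq1 hq3
  simp only [ContinuousLinearMap.comp_apply] at huS
  have hφ : ‖Bh x‖ ≤ 1 := by
    have := hKB x
    rwa [hxn, mul_inv_cancel₀ hK0.ne'] at this
  by_contra hcon
  have hsmall : ∀ t ∈ Set.Icc (1 / l) (2 / l), ‖u t - Binvh (v t)‖ < m * l := by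
    intro t ht
    by_contra h
    push Not at h
    refine hcon ⟨t, hl2.trans_le ht.1, u, du, ddu, v, fun t => - L (v t), hu0, ?_, ?_, hu, hdu, hcd,
      huS, hv, ?_, fun t => ?_, ?_⟩
    · rw [hdu0]; exact hφ
    · rw [hdu0, hi1, hv0]
    · have : Continuous v := continuous_iff_continuousAt.2 fun t => (hv t).continuousAt
      exact (L.continuous.comp this).neg
    · simpa using hvS t
    · have h1 := ht.1
      rw [div_le_iff₀ hl] at h1
      have h0 : 0 < t := lt_of_lt_of_le (by positivity) ht.1
      calc m = m * 1 := (mul_one m).symm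
        _ ≤ m * (t * l) := by gcongr
        _ = t * (m * l) := by ring
        _ ≤ _ := by gcongr
  set χ : H := Binvh x with hχ
  have hχx : Bh χ = x := hi2 x
  have hχS : (χ, Bh (L x)) ∈ S := hdom _ _ hx
  have hχ1 : ‖χ‖ ≤ 1 := by
    have := hKI x
    rwa [hxn, mul_inv_cancel₀ hK0.ne'] at this
  have hχ2 : (K ^ 4)⁻¹ ≤ ‖χ‖ ^ 2 := by
    have h1 := hKB χ
    rw [hχx, hxn] at h1
    have h2 : (K ^ 2)⁻¹ ≤ ‖χ‖ := by
      rw [inv_le_iff_one_le_mul₀' (by positivity)]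
      rw [inv_le_iff_one_le_mul₀' hK0] at h1
      nlinarith
    calc (K ^ 4)⁻¹ = ((K ^ 2)⁻¹) ^ 2 := by rw [inv_pow, ← pow_mul]
      _ ≤ _ := by gcongr
  have htpos : ∀ t ∈ Set.Icc (1 / l) (2 / l), 0 < t := fun t ht =>
    lt_of_lt_of_le (by positivity) ht.1
  have hU : ∀ t ∈ Set.Icc (1 / l) (2 / l), HasDerivAt u (du t) t := fun t ht =>
    (hu t (htpos t ht).le).hasDerivAt (Ici_mem_nhds (htpos t ht))
  have hdU : ∀ t ∈ Set.Icc (1 / l) (2 / l), HasDerivAt du (ddu t) t := fun t ht =>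
    (hdu t (htpos t ht).le).hasDerivAt (Ici_mem_nhds (htpos t ht))
  have hc1 : ∀ (y : H) (f : ℝ → H) (f' : H) (t : ℝ), HasDerivAt f f' t →
      HasDerivAt (fun t => ip y (f t)) (ip y f') t := by
    intro y f f' t hf
    have := ip_hasDerivAt (hasDerivAt_const t y) hf
    refine this.congr_deriv ?_
    simp [ip]
  have hfin := window (l := l) (α := ‖χ‖ ^ 2) (S1 := m) (S2 := m) (S3 := 2 * m) hl (by positivity)
    (a := fun t => ip χ (u t)) (a' := fun t => ip χ (du t)) (a'' := fun t => ip χ (ddu t))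
    (b := fun t => ip (Bh x) (u t - Binvh (v t)))
    (b' := fun t => ip (Bh x) (du t - Binvh (- L (v t))))
    (fun t ht => hc1 _ _ _ _ (hU t ht)) (fun t ht => hc1 _ _ _ _ (hdU t ht))
    (fun t ht => hc1 _ _ _ _ ((hU t ht).sub (clm_hasDerivAt Binvh (hv t))))
    (fun t ht => ?_) (fun t ht => ?_) (fun t ht => ?_)
  · have h1 : Real.exp (-2) * (K ^ 4)⁻¹ / 30 ≤ ‖χ‖ ^ 2 * Real.exp (-2) / 30 := by
      rw [mul_comm]; gcongr
    have h2 : Real.exp (-2) * (K ^ 4)⁻¹ / 30 = 8 * m := by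
      simp only [m]; field_simp; norm_num
    linarith
  · refine (abs_ip_le _ _).trans ?_
    have := (hsmall t ht).le
    calc _ ≤ 1 * (m * l) := by gcongr
      _ = m * l := one_mul _
  · have e1 : ip χ (- ddu t - Bh (Bh (du t))) = ip (Bh (L x)) (u t) :=
      (congrArg Complex.re (hS.symm _ hχS _ (huS t (htpos t ht).le))).symm
    have e2 : ip (Bh (L x)) (Binvh (v t)) = ip χ (Bh (L (v t))) :=
      congrArg Complex.re (hS.symm _ hχS _ (hvS t))
    have e3 : ip (Bh x) (Binvh (L (v t))) = ip χ (Bh (L (v t))) := by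
      rw [hsi, hi2, ← hsi, hχx]
    have e4 : ip χ (Bh (Bh (du t))) = ip (Bh x) (du t) := by
      rw [← hsi, hχx, ← hsi]
    have e5 : ip χ (ddu t) + ip (Bh x) (du t - Binvh (- L (v t))) +
        l * ip (Bh x) (u t - Binvh (v t)) =
        - ip (Bh (L x - (l : ℂ) • x)) (u t - Binvh (v t)) := by
      rw [ip_sub_right, ip_neg_right, e4] at e1
      rw [map_neg, ip_sub_right, ip_neg_right, e3, map_sub, map_smul, ip_sub_left (Bh (L x)),
        ip_smul_left, ip_sub_right (Bh (L x)), e2]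
      linarith
    rw [e5, abs_neg]
    refine (abs_ip_le _ _).trans ?_
    have h1 : ‖Bh (L x - (l : ℂ) • x)‖ ≤ l := by
      refine (hKB _).trans ?_
      have := hL x
      rw [hxn] at this
      calc K * ‖L x - (l : ℂ) • x‖ ≤ K * (m * l * K⁻¹) := by gcongr
        _ = m * l := by field_simp
        _ ≤ 1 * l := by gcongr
        _ = l := one_mul l
    have := (hsmall t ht).le
    calc _ ≤ l * (m * l) := by gcongr
      _ = _ := by ring
  · have e1 : ip χ (u t) - ‖χ‖ ^ 2 * Real.exp (-(l * t)) = ip χ (u t - Binvh (v t)) +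
        ip χ (Binvh (v t - ((Real.exp (-(l * t)) : ℝ) : ℂ) • x)) := by
      rw [map_sub, map_smul, ← hχ, ip_sub_right, ip_sub_right, ip_smul_right, ip_self]
      ring
    rw [e1]
    have h1 := abs_ip_le χ (u t - Binvh (v t))
    have h2 := abs_ip_le χ (Binvh (v t - ((Real.exp (-(l * t)) : ℝ) : ℂ) • x))
    have h3 : ‖Binvh (v t - ((Real.exp (-(l * t)) : ℝ) : ℂ) • x)‖ ≤ m := by
      refine (hKI _).trans ?_
      have := hvb t (htpos t ht).le ht.2
      rw [hxn] at this
      calc _ ≤ K * (m * K⁻¹) := by gcongr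
        _ = m := by field_simp
    have h4 : ‖u t - Binvh (v t)‖ ≤ m := by
      have := (hsmall t ht).le
      nlinarith
    have h5 : ‖χ‖ * ‖u t - Binvh (v t)‖ ≤ 1 * m := by gcongr
    have h6 : ‖χ‖ * ‖Binvh (v t - ((Real.exp (-(l * t)) : ℝ) : ℂ) • x)‖ ≤ 1 * m := by gcongr
    refine (abs_add_le _ _).trans ?_
    linarith
end

/-- optimality of the rate `t⁻¹` when `0` is in the spectrum of `A`. -/
theorem stmt7
    {H : Type*} [NormedAddCommGroup H] [InnerProductSpace ℂ H] [CompleteSpace H]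
    (A : H →ₗ.[ℂ] H) (hA_sa : IsSelfAdjoint A)
    (hA_pos : ∀ u : A.domain, u ≠ 0 → 0 < (⟪A u, (u : H)⟫).re)
    (B : H →L[ℂ] H) (hB_sa : IsSelfAdjoint B)
    (c : ℝ) (hc : 0 < c)
    (hB_pos : ∀ u : H, c * ‖u‖ ^ 2 ≤ (⟪B u, u⟫).re)
    -- `Bh` is the positive square root `B^{1/2}` of `B`, `Binvh` its inverse `B^{-1/2}`
    (Bh Binvh : H →L[ℂ] H)
    (hBh_sq : Bh ∘L Bh = B) (hBh_sa : IsSelfAdjoint Bh)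
    (hBh_pos : ∀ u : H, 0 ≤ (⟪Bh u, u⟫).re)
    (hBinv₁ : Binvh ∘L Bh = ContinuousLinearMap.id ℂ H)
    (hBinv₂ : Bh ∘L Binvh = ContinuousLinearMap.id ℂ H)
    -- `B^{±1/2}` map `D(A)` into `D(A)` with the stated bounds
    (hBhD : ∀ u : A.domain, Bh (u : H) ∈ A.domain)
    (hBinvD : ∀ u : A.domain, Binvh (u : H) ∈ A.domain)
    (C₀ : ℝ) (hC₀ : 0 < C₀)
    (hBhA : ∀ u : A.domain, ‖A ⟨Bh (u : H), hBhD u⟩‖ ≤ C₀ * (‖(u : H)‖ + ‖A u‖))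
    (hBinvA : ∀ u : A.domain, ‖A ⟨Binvh (u : H), hBinvD u⟩‖ ≤ C₀ * (‖(u : H)‖ + ‖A u‖)) :
    ∀ _hspec : (∃ w : ℕ → A.domain, (∀ n, ‖(w n : H)‖ = 1) ∧
        Filter.Tendsto (fun n => ‖A (w n)‖) Filter.atTop (nhds 0)),
      ∃ c₀ > (0:ℝ), ∀ T > (0:ℝ), ∃ t > T,
        ∃ (sol : DampedWaveSolution A B) (hs : HeatSolution A Binvh),
          hs.v 0 = Bh (sol.u 0) + Binvh (sol.du 0) ∧
          ‖sol.u 0‖ ^ 2 + (⟪sol.Au 0, sol.u 0⟫).re + ‖sol.du 0‖ ^ 2 ≤ 1 ∧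
          c₀ ≤ t * ‖sol.u t - Binvh (hs.v t)‖ := by
  rintro ⟨w, hw1, hw0⟩
  subst hBh_sq
  have hS := PosSA.of_selfAdjoint A hA_sa hA_pos
  have hi1 : ∀ f, Binvh (Bh f) = f := fun f => congrArg (fun Z : H →L[ℂ] H => Z f) hBinv₁
  have hi2 : ∀ f, Bh (Binvh f) = f := fun f => congrArg (fun Z : H →L[ℂ] H => Z f) hBinv₂
  have hsym : ∀ f g, ⟪Bh f, g⟫ = ⟪f, Bh g⟫ :=
    ContinuousLinearMap.isSelfAdjoint_iff_isSymmetric.1 hBh_sa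
  have hval : ∀ (x y : H) (h : (x, y) ∈ A.graph) (hx : x ∈ A.domain), A ⟨x, hx⟩ = y := by
    intro x y h hx
    obtain ⟨a, ha, ha'⟩ := (LinearPMap.mem_graph_iff A).1 h
    simp only at ha ha'
    subst ha
    exact ha'
  obtain ⟨c₀, hc₀, H0⟩ := core hS
    (by
      rintro ⟨x, y⟩ hxy hy
      obtain ⟨a, ha, ha'⟩ := (LinearPMap.mem_graph_iff A).1 hxy
      simp only at ha ha' hy ⊢
      by_contra hne
      have := hA_pos a (fun h => hne (by rw [← ha, h]; rfl))
      rw [ha', hy, inner_zero_left] at this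
      simp at this)
    Bh Binvh hsym hi1 hi2 c hc hB_pos
    (by
      rintro ⟨x, y⟩ hxy
      obtain ⟨a, ha, ha'⟩ := (LinearPMap.mem_graph_iff A).1 hxy
      simp only at ha ha' ⊢
      subst ha
      exact ⟨_, A.mem_graph ⟨Bh a, hBhD a⟩⟩)
    (fun n => ((w n : H), A (w n))) (fun n => A.mem_graph (w n)) hw1 hw0
  refine ⟨c₀, hc₀, fun T hT => ?_⟩
  obtain ⟨t, htT, u, du, ddu, v, dv, hu0, hdu0, hv0, hu, hdu, hcd, huS, hv, hcv, hvS, hfin⟩ :=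
    H0 T hT
  have hdc : ContinuousOn du (Set.Ici 0) := fun s hs => (hdu s hs).continuousWithinAt
  let sol : DampedWaveSolution A (Bh ∘L Bh) :=
    { u := u
      du := du
      ddu := ddu
      Au := fun s => - ddu s - Bh (Bh (du s))
      mem := fun s hs => LinearPMap.mem_domain_of_mem_graph (huS s hs)
      hAu := fun s hs => hval _ _ (huS s hs) _
      hdu := hu
      hddu := hdu
      cont_ddu := hcd
      cont_Au := hcd.neg.sub (Bh.continuous.comp_continuousOn (Bh.continuous.comp_continuousOn hdc))
      eqn := fun s hs => by simp only [ContinuousLinearMap.comp_apply]; abel }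
  let hs : HeatSolution A Binvh :=
    { v := v
      dv := dv
      mem := fun s _ => LinearPMap.mem_domain_of_mem_graph (hvS s)
      hdv := fun s _ => (hv s).hasDerivWithinAt
      cont_dv := hcv.continuousOn
      eqn := fun s _ => by
        rw [hval _ _ (hvS s), map_neg, hi1, add_neg_cancel] }
  refine ⟨t, htT, sol, hs, ?_, ?_, hfin⟩
  · change v 0 = Bh (u 0) + Binvh (du 0)
    rw [hu0, hv0, map_zero, zero_add]
  · change ‖u 0‖ ^ 2 + (⟪- ddu 0 - Bh (Bh (du 0)), u 0⟫).re + ‖du 0‖ ^ 2 ≤ 1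
    rw [hu0, inner_zero_right, norm_zero]
    simp only [Complex.zero_re]
    have := norm_nonneg (du 0)
    nlinarith
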